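/- Let Z : LC(ℝ) → ℝ be a simple, τ-upper semicontinuous, translation invariant and dually epi-translation invariant valuation that vanishes on indicator functions of closed intervals, let m > 0, q(x) = x²/2, and define ζ : (0,∞) → ℝ by ζ(a) = Z(a·q + I_{[-m,m]})/(2m). Then ζ is non-negative and concave: ζ(λs + (1−λ)r) ≥ λζ(s) + (1−λ)ζ(r) for all 0 ≤ r < s and λ ∈ (0,1). -/

import Mathlib

open MeasureTheory Filter Topology Pointwise Asymptotics

noncomputable section

variable {E : Type*} [NormedAddCommGroup E] [NormedSpace ℝ E]

/-- The effective domain of an extended-real-valued function. -/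
def edom (u : E → EReal) : Set E := {x | u x < ⊤}

/-- `u` has Lipschitz constant `L` on the interior of its domain. -/
def LipBound (u : E → EReal) (L : ℝ) : Prop :=
  ∀ x ∈ interior (edom u), ∀ y ∈ interior (edom u),
    |(u x).toReal - (u y).toReal| ≤ L * ‖x - y‖

/-- Membership in `LC`: proper, lower semicontinuous, convex, compact domain,
Lipschitz on the interior of the domain. -/
def IsLC (u : E → EReal) : Prop :=
  (∀ x y : E, ∀ t : ℝ, 0 < t → t < 1 →
      u (t • x + (1 - t) • y) ≤ (t : EReal) * u x + ((1 - t : ℝ) : EReal) * u y) ∧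
  LowerSemicontinuous u ∧
  (∀ x, u x ≠ ⊥) ∧
  (∃ x, u x ≠ ⊤) ∧
  IsCompact (edom u) ∧
  (∃ L : ℝ, 0 < L ∧ LipBound u L)

/-- τ-convergence: epi-convergence together with uniformly bounded Lipschitz constants. -/
def TauConv (uk : ℕ → E → EReal) (u : E → EReal) : Prop :=
  (∀ k, IsLC (uk k)) ∧ IsLC u ∧
  (∀ (x : E) (xk : ℕ → E), Tendsto xk atTop (𝓝 x) →
      u x ≤ liminf (fun k => uk k (xk k)) atTop) ∧
  (∀ x : E, ∃ xk : ℕ → E, Tendsto xk atTop (𝓝 x) ∧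
      Tendsto (fun k => uk k (xk k)) atTop (𝓝 (u x))) ∧
  (∃ M : ℝ, 0 < M ∧ ∀ k, LipBound (uk k) M)

/-- Valuation property on `LC`. -/
def IsVal (Z : (E → EReal) → ℝ) : Prop :=
  ∀ u v : E → EReal, IsLC u → IsLC v → IsLC (fun x => min (u x) (v x)) →
    Z (fun x => min (u x) (v x)) + Z (fun x => max (u x) (v x)) = Z u + Z v

/-- τ-upper semicontinuity. -/
def TauUSC (Z : (E → EReal) → ℝ) : Prop :=
  ∀ (uk : ℕ → E → EReal) (u : E → EReal), TauConv uk u →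
    limsup (fun k => Z (uk k)) atTop ≤ Z u

/-- τ-continuity. -/
def TauCont (Z : (E → EReal) → ℝ) : Prop :=
  ∀ (uk : ℕ → E → EReal) (u : E → EReal), TauConv uk u →
    Tendsto (fun k => Z (uk k)) atTop (𝓝 (Z u))

/-- Translation invariance. -/
def TransInv (Z : (E → EReal) → ℝ) : Prop :=
  ∀ u : E → EReal, IsLC u → ∀ y : E, Z (fun x => u (x - y)) = Z u

/-- Dual epi-translation invariance. -/
def DualTransInv (Z : (E → EReal) → ℝ) : Prop :=
  ∀ u : E → EReal, IsLC u → ∀ (l : E →ₗ[ℝ] ℝ) (c : ℝ),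
    Z (fun x => u x + ((l x + c : ℝ) : EReal)) = Z u

/-- SL_n invariance. -/
def SLInv (Z : (E → EReal) → ℝ) : Prop :=
  ∀ u : E → EReal, IsLC u → ∀ φ : E →ₗ[ℝ] E, LinearMap.det φ = 1 →
    Z (fun x => u (φ x)) = Z u

/-- The class `Conc`. -/
def IsConc (ζ : ℝ → ℝ) : Prop :=
  (∀ t ∈ Set.Ici (0 : ℝ), 0 ≤ ζ t) ∧ ConcaveOn ℝ (Set.Ici 0) ζ ∧
  Tendsto ζ (𝓝[>] 0) (𝓝 0) ∧
  Tendsto (fun t => ζ t / t) atTop (𝓝 0)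

open Classical in
/-- `(∞-valued) indicator function` of a set. -/
noncomputable def eIndicator (K : Set E) : E → EReal := fun x =>
  if x ∈ K then (0 : EReal) else ⊤

/-- Real part of an extended-real-valued function. -/
def toRealFn (u : E → EReal) : E → ℝ := fun x => (u x).toReal

open Classical in
/-- Second derivative of `u`, set to `0` where `u` is not twice differentiable. -/
noncomputable def secondDeriv (u : ℝ → EReal) : ℝ → ℝ := fun x =>
  if DifferentiableAt ℝ (toRealFn u) x ∧ DifferentiableAt ℝ (deriv (toRealFn u)) x
  then deriv (deriv (toRealFn u)) x
  else 0

/-- The function `ζ(a) = Z(a·q + I_{[-m,m]})/(2m)`, where `q(x) = x²/2`. -/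
noncomputable def zetaOf (Z : (ℝ → EReal) → ℝ) (m : ℝ) : ℝ → ℝ := fun a =>
  Z (fun x => ((a * (x ^ 2 / 2) : ℝ) : EReal) + eIndicator (Set.Icc (-m) m) x) / (2 * m)

/-- Real function restricted to an interval, extended by `⊤`. -/
def ext (g : ℝ → ℝ) (a b : ℝ) : ℝ → EReal := fun x =>
  (g x : EReal) + eIndicator (Set.Icc a b) x

lemma ext_in {g : ℝ → ℝ} {a b x : ℝ} (h : x ∈ Set.Icc a b) : ext g a b x = (g x : EReal) := by
  simp only [ext, eIndicator, if_pos h, add_zero]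

lemma ext_out {g : ℝ → ℝ} {a b x : ℝ} (h : x ∉ Set.Icc a b) : ext g a b x = ⊤ := by
  simp only [ext, eIndicator, if_neg h, EReal.coe_add_top]

/-- Bounded subgradients on an interval. -/
def SG (g : ℝ → ℝ) (a b M : ℝ) : Prop :=
  ∀ x ∈ Set.Icc a b, ∃ c, |c| ≤ M ∧ ∀ z ∈ Set.Icc a b, g x + c * (z - x) ≤ g z

lemma SG.mono {g : ℝ → ℝ} {a b M a' b' : ℝ} (h : SG g a b M) (ha : a ≤ a') (hb : b' ≤ b) :
    SG g a' b' M := by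
  intro x hx
  obtain ⟨c, hc, h2⟩ := h x ⟨ha.trans hx.1, hx.2.trans hb⟩
  exact ⟨c, hc, fun z hz => h2 z ⟨ha.trans hz.1, hz.2.trans hb⟩⟩

lemma SG.lip {g : ℝ → ℝ} {a b M : ℝ} (h : SG g a b M) {x y : ℝ} (hx : x ∈ Set.Icc a b)
    (hy : y ∈ Set.Icc a b) : |g x - g y| ≤ M * |x - y| := by
  obtain ⟨c, hc, h1⟩ := h x hx
  obtain ⟨e, he, h2⟩ := h y hy
  have h1 := h1 y hy
  have h2 := h2 x hx
  have k1 : |c * (x - y)| ≤ M * |x - y| := by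
    rw [abs_mul]; gcongr
  have k2 : |e * (x - y)| ≤ M * |x - y| := by
    rw [abs_mul]; gcongr
  rw [abs_le] at *
  constructor <;> nlinarith

lemma SG.contOn {g : ℝ → ℝ} {a b M : ℝ} (h : SG g a b M) : ContinuousOn g (Set.Icc a b) := by
  have : LipschitzOnWith (Real.toNNReal M) g (Set.Icc a b) := by
    apply LipschitzOnWith.of_dist_le_mul
    intro x hx y hy
    rw [Real.dist_eq, Real.dist_eq]
    refine (h.lip hx hy).trans ?_
    gcongr
    exact Real.le_coe_toNNReal M
  exact this.continuousOn

lemma edom_ext (g : ℝ → ℝ) (a b : ℝ) : edom (ext g a b) = Set.Icc a b := by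
  ext x
  by_cases h : x ∈ Set.Icc a b
  · simp only [edom, Set.mem_ofPred_eq, ext_in h, h, EReal.coe_lt_top]
  · simp only [edom, Set.mem_ofPred_eq, ext_out h, h, lt_irrefl]

lemma SG.lipBound {g : ℝ → ℝ} {a b M N : ℝ} (h : SG g a b M) (hN : M ≤ N) :
    LipBound (ext g a b) N := by
  intro x hx y hy
  rw [edom_ext] at hx hy
  have hx := interior_subset hx
  have hy := interior_subset hy
  rw [ext_in hx, ext_in hy, EReal.toReal_coe, EReal.toReal_coe, Real.norm_eq_abs]
  refine (h.lip hx hy).trans ?_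
  gcongr

lemma SG.isLC {g : ℝ → ℝ} {a b M : ℝ} (h : SG g a b M) (hab : a ≤ b) : IsLC (ext g a b) := by
  have hbot : ∀ x, ext g a b x ≠ ⊥ := by
    intro x
    by_cases hx : x ∈ Set.Icc a b
    · rw [ext_in hx]; exact EReal.coe_ne_bot _
    · rw [ext_out hx]; exact top_ne_bot
  have hmul : ∀ (t : ℝ) (x : ℝ), 0 < t → (t : EReal) * ext g a b x ≠ ⊥ := by
    intro t x ht
    by_cases hx : x ∈ Set.Icc a b
    · rw [ext_in hx, ← EReal.coe_mul]; exact EReal.coe_ne_bot _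
    · rw [ext_out hx, EReal.coe_mul_top_of_pos ht]; exact top_ne_bot
  refine ⟨?_, ?_, hbot, ⟨a, ?_⟩, ?_, ?_⟩
  · intro x y t ht0 ht1
    have ht1' : 0 < 1 - t := by linarith
    by_cases hx : x ∈ Set.Icc a b
    · by_cases hy : y ∈ Set.Icc a b
      · have hw : t • x + (1 - t) • y ∈ Set.Icc a b :=
          convex_Icc a b hx hy ht0.le ht1'.le (by ring)
        rw [ext_in hx, ext_in hy, ext_in hw, ← EReal.coe_mul, ← EReal.coe_mul, ← EReal.coe_add,
          EReal.coe_le_coe_iff]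
        obtain ⟨c, -, hc⟩ := h _ hw
        have h1 := hc x hx
        have h2 := hc y hy
        simp only [smul_eq_mul] at *
        nlinarith [mul_le_mul_of_nonneg_left h1 ht0.le, mul_le_mul_of_nonneg_left h2 ht1'.le]
      · rw [ext_out hy, EReal.coe_mul_top_of_pos ht1', EReal.add_top_of_ne_bot (hmul t x ht0)]
        exact le_top
    · rw [ext_out hx, EReal.coe_mul_top_of_pos ht0,
        EReal.top_add_of_ne_bot (hmul (1 - t) y ht1')]
      exact le_top
  · intro x y hy
    by_cases hx : x ∈ Set.Icc a b
    · rw [ext_in hx] at hy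
      have hc : ContinuousWithinAt (fun x => (g x : EReal)) (Set.Icc a b) x :=
        continuous_coe_real_ereal.continuousAt.comp_continuousWithinAt (h.contOn x hx)
      have := hc.eventually (lt_mem_nhds hy)
      rw [eventually_nhdsWithin_iff] at this
      filter_upwards [this] with z hz
      by_cases hzz : z ∈ Set.Icc a b
      · rw [ext_in hzz]; exact hz hzz
      · rw [ext_out hzz]; exact lt_of_lt_of_le hy le_top
    · have : ∀ᶠ z in 𝓝 x, z ∈ (Set.Icc a b)ᶜ := isClosed_Icc.isOpen_compl.mem_nhds hx
      filter_upwards [this] with z hz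
      rw [ext_out hz]; rw [ext_out hx] at hy; exact hy
  · rw [ext_in ⟨le_refl a, hab⟩]; exact EReal.coe_ne_top _
  · rw [edom_ext]; exact isCompact_Icc
  · exact ⟨|M| + 1, by positivity, h.lipBound (by linarith [le_abs_self M])⟩

lemma tauConv_ext {g : ℝ → ℝ} {gk : ℕ → ℝ → ℝ} {a b M : ℝ} (hab : a ≤ b)
    (hg : SG g a b M) (hgk : ∀ k, SG (gk k) a b M) (e : ℕ → ℝ) (he : Tendsto e atTop (𝓝 0))
    (hb : ∀ k, ∀ x ∈ Set.Icc a b, |gk k x - g x| ≤ e k) :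
    TauConv (fun k => ext (gk k) a b) (ext g a b) := by
  refine ⟨fun k => (hgk k).isLC hab, hg.isLC hab, ?_, ?_,
    ⟨|M| + 1, by positivity, fun k => (hgk k).lipBound (by linarith [le_abs_self M])⟩⟩
  · intro x xk hxk
    by_cases hx : x ∈ Set.Icc a b
    · refine le_of_forall_lt fun y hy => ?_
      rw [ext_in hx] at hy
      obtain ⟨q, hq1, hq2⟩ := EReal.lt_iff_exists_real_btwn.1 hy
      refine lt_of_lt_of_le hq1 ?_
      refine le_liminf_of_le (by isBoundedDefault) ?_
      have hq2 : q < g x := EReal.coe_lt_coe_iff.1 hq2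
      have h1 : ∀ᶠ k in atTop, e k < (g x - q) / 2 :=
        he.eventually (gt_mem_nhds (by linarith))
      have h2 := (hg.contOn x hx).eventually (lt_mem_nhds (show (g x + q) / 2 < g x by linarith))
      rw [eventually_nhdsWithin_iff] at h2
      filter_upwards [h1, hxk.eventually h2] with k hk1 hk2
      by_cases hz : xk k ∈ Set.Icc a b
      · rw [ext_in hz, EReal.coe_le_coe_iff]
        have := abs_le.1 (hb k _ hz)
        have := hk2 hz
        linarith
      · rw [ext_out hz]; exact le_top
    · have : ∀ᶠ z in 𝓝 x, z ∈ (Set.Icc a b)ᶜ := isClosed_Icc.isOpen_compl.mem_nhds hx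
      refine le_liminf_of_le (by isBoundedDefault) ?_
      filter_upwards [hxk.eventually this] with k hk
      rw [ext_out hk]; exact le_top
  · intro x
    refine ⟨fun _ => x, tendsto_const_nhds, ?_⟩
    by_cases hx : x ∈ Set.Icc a b
    · simp only [ext_in hx]
      refine (continuous_coe_real_ereal.tendsto _).comp ?_
      rw [tendsto_iff_norm_sub_tendsto_zero]
      exact squeeze_zero (fun _ => norm_nonneg _) (fun k => hb k x hx) he
    · simp only [ext_out hx]; exact tendsto_const_nhds

lemma ext_congr {g f : ℝ → ℝ} {a b : ℝ} (h : ∀ x ∈ Set.Icc a b, g x = f x) :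
    ext g a b = ext f a b := by
  funext x
  by_cases hx : x ∈ Set.Icc a b
  · rw [ext_in hx, ext_in hx, h x hx]
  · rw [ext_out hx, ext_out hx]

lemma Z_split {Z : (ℝ → EReal) → ℝ} (hval : IsVal Z)
    (hsimple : ∀ u : ℝ → EReal, IsLC u → (∃ x : ℝ, edom u = {x}) → Z u = 0)
    {g : ℝ → ℝ} {a b c M : ℝ} (hg : SG g a c M) (hab : a ≤ b) (hbc : b ≤ c) :
    Z (ext g a c) = Z (ext g a b) + Z (ext g b c) := by
  have hmin : (fun x => min (ext g a b x) (ext g b c x)) = ext g a c := by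
    funext x
    by_cases h1 : x ∈ Set.Icc a b
    · have h3 : x ∈ Set.Icc a c := ⟨h1.1, h1.2.trans hbc⟩
      by_cases h2 : x ∈ Set.Icc b c
      · rw [ext_in h1, ext_in h2, ext_in h3, min_self]
      · rw [ext_in h1, ext_out h2, ext_in h3, min_eq_left le_top]
    · by_cases h2 : x ∈ Set.Icc b c
      · have h3 : x ∈ Set.Icc a c := ⟨hab.trans h2.1, h2.2⟩
        rw [ext_out h1, ext_in h2, ext_in h3, min_eq_right le_top]
      · have h3 : x ∉ Set.Icc a c := fun h => (le_total x b).elim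
          (fun h' => h1 ⟨h.1, h'⟩) (fun h' => h2 ⟨h', h.2⟩)
        rw [ext_out h1, ext_out h2, ext_out h3, min_self]
  have hmax : (fun x => max (ext g a b x) (ext g b c x)) = ext g b b := by
    funext x
    by_cases h3 : x ∈ Set.Icc b b
    · have hx : x = b := le_antisymm h3.2 h3.1
      have h1 : x ∈ Set.Icc a b := by rw [hx]; exact ⟨hab, le_rfl⟩
      have h2 : x ∈ Set.Icc b c := by rw [hx]; exact ⟨le_rfl, hbc⟩
      rw [ext_in h1, ext_in h2, ext_in h3, max_self]
    · rw [ext_out h3]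
      by_cases h1 : x ∈ Set.Icc a b
      · have h2 : x ∉ Set.Icc b c := fun h => h3 ⟨h.1, h1.2⟩
        rw [ext_out h2, max_eq_right le_top]
      · rw [ext_out h1, max_eq_left le_top]
  have hbb : Z (ext g b b) = 0 := by
    refine hsimple _ ((hg.mono hab hbc).isLC le_rfl) ⟨b, ?_⟩
    rw [edom_ext, Set.Icc_self]
  have := hval (ext g a b) (ext g b c) ((hg.mono le_rfl hbc).isLC hab)
    ((hg.mono hab le_rfl).isLC hbc) (by rw [hmin]; exact hg.isLC (hab.trans hbc))
  rw [hmin, hmax, hbb] at this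
  linarith

lemma Z_affine {Z : (ℝ → EReal) → ℝ} (hdual : DualTransInv Z) {g f : ℝ → ℝ} {a b M : ℝ}
    (hg : SG g a b M) (hab : a ≤ b) (A B : ℝ) (h : ∀ x ∈ Set.Icc a b, f x = g x + (A * x + B)) :
    Z (ext f a b) = Z (ext g a b) := by
  rw [← hdual _ (hg.isLC hab) (LinearMap.lsmul ℝ ℝ A) B]
  congr 1
  funext x
  by_cases hx : x ∈ Set.Icc a b
  · rw [ext_in hx, ext_in hx, h x hx, ← EReal.coe_add]
    simp
  · rw [ext_out hx, ext_out hx, EReal.top_add_coe]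

lemma Z_transl {Z : (ℝ → EReal) → ℝ} (htrans : TransInv Z) {g : ℝ → ℝ} {a b M : ℝ}
    (hg : SG g a b M) (hab : a ≤ b) (y : ℝ) :
    Z (ext (fun x => g (x - y)) (a + y) (b + y)) = Z (ext g a b) := by
  rw [← htrans _ (hg.isLC hab) y]
  congr 1
  funext x
  by_cases hx : x ∈ Set.Icc (a + y) (b + y)
  · have hx' : x - y ∈ Set.Icc a b := ⟨by linarith [hx.1], by linarith [hx.2]⟩
    rw [ext_in hx, ext_in hx']
  · have hx' : x - y ∉ Set.Icc a b := fun h => hx ⟨by linarith [h.1], by linarith [h.2]⟩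
    rw [ext_out hx, ext_out hx']

lemma SG_quad {α : ℝ} (hα : 0 ≤ α) (a b : ℝ) :
    SG (fun x => α * (x ^ 2 / 2)) a b (α * (|a| + |b|)) := by
  intro x hx
  refine ⟨α * x, ?_, ?_⟩
  · rw [abs_mul, abs_of_nonneg hα]
    gcongr
    rw [abs_le]
    constructor
    · linarith [hx.1, neg_abs_le a, abs_nonneg b]
    · linarith [hx.2, le_abs_self b, abs_nonneg a]
  · intro z _
    nlinarith [mul_nonneg hα (sq_nonneg (z - x))]

/-- Values on quadratics. -/
def FF (Z : (ℝ → EReal) → ℝ) (α t : ℝ) : ℝ := Z (ext (fun x => α * (x ^ 2 / 2)) 0 t)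

lemma Z_quad {Z : (ℝ → EReal) → ℝ} (htrans : TransInv Z) (hdual : DualTransInv Z)
    {α : ℝ} (hα : 0 ≤ α) {f : ℝ → ℝ} {a b : ℝ} (hab : a ≤ b) (A B : ℝ)
    (h : ∀ x ∈ Set.Icc a b, f x = α * (x ^ 2 / 2) + (A * x + B)) :
    Z (ext f a b) = FF Z α (b - a) := by
  rw [FF, ← Z_transl htrans (SG_quad hα 0 (b - a)) (by linarith) a,
    Z_affine hdual (SG_quad hα a b) hab A B h, zero_add, sub_add_cancel]
  symm
  apply Z_affine hdual (SG_quad hα a b) hab (-α * a) (α * a ^ 2 / 2)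
  intro x _
  ring

lemma FF_add {Z : (ℝ → EReal) → ℝ} (hval : IsVal Z) (htrans : TransInv Z) (hdual : DualTransInv Z)
    (hsimple : ∀ u : ℝ → EReal, IsLC u → (∃ x : ℝ, edom u = {x}) → Z u = 0)
    {α : ℝ} (hα : 0 ≤ α) {s t : ℝ} (hs : 0 ≤ s) (ht : 0 ≤ t) :
    FF Z α (s + t) = FF Z α s + FF Z α t := by
  have h1 := Z_split hval hsimple (SG_quad hα 0 (s + t)) hs (by linarith)
  have h2 := Z_quad (Z := Z) htrans hdual hα (f := fun x => α * (x ^ 2 / 2)) (a := s) (b := s + t)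
    (by linarith) 0 0 (fun x _ => by ring)
  rw [h2, add_sub_cancel_left] at h1
  exact h1

lemma additive_hom {F : ℝ → ℝ} (hadd : ∀ s t, 0 ≤ s → 0 ≤ t → F (s + t) = F s + F t)
    (hnn : ∀ t, 0 ≤ t → 0 ≤ F t) {l d : ℝ} (hl : 0 ≤ l) (hd : 0 ≤ d) : F (l * d) = l * F d := by
  have hn : ∀ (n : ℕ) (t : ℝ), 0 ≤ t → F (n * t) = n * F t := by
    intro n t ht
    induction n with
    | zero =>
      have := hadd 0 0 le_rfl le_rfl
      simp at this ⊢
      exact this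
    | succ n ih =>
      push_cast
      rw [add_mul, one_mul, hadd _ _ (by positivity) ht, ih]; ring
  have hmono : ∀ s t, 0 ≤ s → s ≤ t → F s ≤ F t := by
    intro s t hs hst
    have := hadd s (t - s) hs (by linarith)
    rw [add_sub_cancel] at this
    linarith [hnn (t - s) (by linarith)]
  have key : ∀ n : ℕ, n * |F (l * d) - l * F d| ≤ F d := by
    intro n
    have hnl : 0 ≤ (n : ℝ) * l := by positivity
    have e1 := Nat.floor_le hnl
    have e2 := (Nat.lt_floor_add_one ((n : ℝ) * l)).le
    have m1 := hmono (⌊(n : ℝ) * l⌋₊ * d) (n * (l * d)) (by positivity)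
      (by rw [← mul_assoc]; gcongr)
    have m2 := hmono (n * (l * d)) ((⌊(n : ℝ) * l⌋₊ + 1 : ℕ) * d) (by positivity)
      (by rw [← mul_assoc]; push_cast; gcongr)
    rw [hn _ _ hd, hn _ _ (by positivity)] at m1 m2
    push_cast at m2
    have h0 := hnn d hd
    rw [← Nat.abs_cast n, ← abs_mul, abs_le]
    constructor <;> nlinarith
  by_contra hne
  have hpos : 0 < |F (l * d) - l * F d| := abs_pos.2 (sub_ne_zero.2 hne)
  obtain ⟨n, hn'⟩ := exists_nat_gt (F d / |F (l * d) - l * F d|)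
  rw [div_lt_iff₀ hpos] at hn'
  linarith [key n]

/-- Primitive of the clamp function. -/
def HH (d x : ℝ) : ℝ := ((max x 0) ^ 2 - (max (x - d) 0) ^ 2) / 2

lemma HH_sum (d x : ℝ) (n : ℕ) :
    ∑ j ∈ Finset.range n, HH d (x - j * d) = ((max x 0) ^ 2 - (max (x - n * d) 0) ^ 2) / 2 := by
  induction n with
  | zero => simp
  | succ n ih =>
    rw [Finset.sum_range_succ, ih, HH]
    push_cast
    rw [show x - n * d - d = x - (n + 1) * d by ring]
    ring

/-- Globally bounded subgradients. -/
def Sl (h : ℝ → ℝ) (d : ℝ) : Prop := ∀ x, ∃ c, |c| ≤ d ∧ ∀ z, h x + c * (z - x) ≤ h z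

/-- Approximating functions. -/
def GG (r σ : ℝ) (h : ℝ → ℝ) (d : ℝ) (n : ℕ) (x : ℝ) : ℝ :=
  r * (x ^ 2 / 2) + σ * ∑ j ∈ Finset.range n, h (x - j * d)

lemma SG_GG {r σ d b : ℝ} {h : ℝ → ℝ} (hr : 0 ≤ r) (hσ : 0 ≤ σ) (hh : Sl h d) (n : ℕ) :
    SG (GG r σ h d n) 0 b (r * |b| + σ * (n * d)) := by
  intro x hx
  obtain ⟨c, hc, h1⟩ := SG_quad hr 0 b x hx
  choose e he h2 using fun j : ℕ => hh (x - j * d)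
  refine ⟨c + σ * ∑ j ∈ Finset.range n, e j, ?_, ?_⟩
  · refine (abs_add_le _ _).trans (add_le_add (by simpa using hc) ?_)
    rw [abs_mul, abs_of_nonneg hσ]
    gcongr
    refine (Finset.abs_sum_le_sum_abs _ _).trans ?_
    refine (Finset.sum_le_sum fun j _ => he j).trans ?_
    simp
  · intro z hz
    have h1 := h1 z hz
    have h3 : ∑ j ∈ Finset.range n, (h (x - j * d) + e j * (z - x)) ≤
        ∑ j ∈ Finset.range n, h (z - j * d) := by
      refine Finset.sum_le_sum fun j _ => ?_
      have := h2 j (z - j * d)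
      rwa [sub_sub_sub_cancel_right] at this
    rw [Finset.sum_add_distrib, ← Finset.sum_mul] at h3
    have := mul_le_mul_of_nonneg_left h3 hσ
    simp only [GG]
    nlinarith

lemma key_limit {Z : (ℝ → EReal) → ℝ} (husc : TauUSC Z) {t r σ l c : ℝ} (ht : 0 < t) (hr : 0 ≤ r)
    (hσ : 0 ≤ σ) (hl : 0 ≤ l) (h : ℕ → ℝ → ℝ)
    (hh : ∀ k : ℕ, Sl (h k) (t / (k + 1)))
    (happ : ∀ (k : ℕ) (x : ℝ), |h k x - l * HH (t / (k + 1)) x| ≤ (t / (k + 1)) ^ 2)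
    (hc : ∀ k : ℕ, Z (ext (GG r σ (h k) (t / (k + 1)) (k + 1)) 0 t) = c) :
    c ≤ FF Z (r + l * σ) t := by
  have hkd : ∀ k : ℕ, ((k + 1 : ℕ) : ℝ) * (t / (k + 1)) = t := by
    intro k; push_cast; field_simp
  have hconv : TauConv (fun k : ℕ => ext (GG r σ (h k) (t / (k + 1)) (k + 1)) 0 t)
      (ext (fun x => (r + l * σ) * (x ^ 2 / 2)) 0 t) := by
    have hM : ∀ {g : ℝ → ℝ} {a b M N : ℝ}, SG g a b M → M ≤ N → SG g a b N := by
      intro g a b M N hg hMN x hx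
      obtain ⟨c, hc, h2⟩ := hg x hx
      exact ⟨c, hc.trans hMN, h2⟩
    refine tauConv_ext (M := r * |t| + σ * t + (r + l * σ) * (|0| + |t|)) ht.le
      (hM (SG_quad (by positivity) 0 t) ?_) (fun k => hM (SG_GG hr hσ (hh k) (k + 1)) ?_)
      (fun k : ℕ => (σ * t ^ 2) * (1 / ((k : ℝ) + 1))) ?_ ?_
    · have : 0 ≤ r * |t| + σ * t := by positivity
      linarith
    · rw [hkd]
      have : 0 ≤ (r + l * σ) * (|0| + |t|) := by positivity
      linarith
    · simpa using (tendsto_one_div_add_atTop_nhds_zero_nat (𝕜 := ℝ)).const_mul (σ * t ^ 2)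
    · intro k x hx
      have e1 := HH_sum (t / (k + 1)) x (k + 1)
      rw [hkd, max_eq_left hx.1, max_eq_right (by linarith [hx.2])] at e1
      have e2 : GG r σ (h k) (t / (k + 1)) (k + 1) x - (r + l * σ) * (x ^ 2 / 2) =
          σ * ∑ j ∈ Finset.range (k + 1), (h k (x - j * (t / (k + 1))) -
            l * HH (t / (k + 1)) (x - j * (t / (k + 1)))) := by
        rw [Finset.sum_sub_distrib, ← Finset.mul_sum, e1, GG]
        ring
      rw [e2, abs_mul, abs_of_nonneg hσ, mul_assoc]
      gcongr
      refine (Finset.abs_sum_le_sum_abs _ _).trans ?_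
      refine (Finset.sum_le_sum fun j _ => happ k _).trans ?_
      simp only [Finset.sum_const, Finset.card_range, nsmul_eq_mul]
      rw [pow_two, ← mul_assoc, hkd]
      apply le_of_eq
      ring
  have := husc _ _ hconv
  simp only [hc, limsup_const] at this
  exact this

lemma GG_step {Z : (ℝ → EReal) → ℝ} (hval : IsVal Z) (htrans : TransInv Z) (hdual : DualTransInv Z)
    (hsimple : ∀ u : ℝ → EReal, IsLC u → (∃ x : ℝ, edom u = {x}) → Z u = 0)
    {r σ τ d δ p q : ℝ} {h : ℝ → ℝ} (hr : 0 ≤ r) (hσ : 0 ≤ σ) (hτ : 0 ≤ τ) (hh : Sl h d)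
    (hδ : 0 ≤ δ) (hδd : δ ≤ d)
    (h0 : ∀ x ≤ 0, h x = 0) (p' q' : ℝ) (h1 : ∀ x, 0 ≤ x → x ≤ δ → σ * h x = τ * (x ^ 2 / 2) +
      (p' * x + q'))
    (h2 : ∀ x, δ ≤ x → h x = p * x + q) (n : ℕ) :
    Z (ext (GG r σ h d n) 0 (n * d)) = n * (FF Z (r + τ) δ + FF Z r (d - δ)) := by
  induction n with
  | zero =>
    simp only [Nat.cast_zero, zero_mul]
    refine hsimple _ ((SG_GG hr hσ hh 0).isLC le_rfl) ⟨0, ?_⟩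
    rw [edom_ext, Set.Icc_self]
  | succ n ih =>
    have hd : 0 ≤ d := hδ.trans hδd
    have hnd : 0 ≤ n * d := by positivity
    have hS := SG_GG (b := (n + 1 : ℕ) * d) hr hσ hh (n + 1)
    have e0 : ((n + 1 : ℕ) : ℝ) * d = n * d + d := by push_cast; ring
    rw [e0] at hS ⊢
    rw [Z_split hval hsimple hS hnd (by linarith),
      Z_split hval hsimple (hS.mono hnd le_rfl) (b := n * d + δ) (by linarith) (by linarith)]
    have c1 : ext (GG r σ h d (n + 1)) 0 (n * d) = ext (GG r σ h d n) 0 (n * d) := by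
      apply ext_congr
      intro x hx
      simp only [GG]
      rw [Finset.sum_range_succ, h0 (x - n * d) (by linarith [hx.2]), add_zero]
    obtain ⟨A, B, hAB⟩ : ∃ A B : ℝ, ∀ x, n * d ≤ x →
        ∑ j ∈ Finset.range n, h (x - j * d) = A * x + B := by
      refine ⟨∑ j ∈ Finset.range n, p, ∑ j ∈ Finset.range n, (q - p * (j * d)), ?_⟩
      intro x hx
      rw [Finset.sum_mul, ← Finset.sum_add_distrib]
      refine Finset.sum_congr rfl fun j hj => ?_
      have hj : (j : ℝ) + 1 ≤ n := by
        have := Finset.mem_range.1 hj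
        exact_mod_cast this
      rw [h2 _ (by nlinarith)]
      ring
    have c2 : Z (ext (GG r σ h d (n + 1)) (n * d) (n * d + δ)) = FF Z (r + τ) δ := by
      rw [Z_quad htrans hdual (α := r + τ) (by positivity) (by linarith)
        (σ * A + p' - τ * (n * d)) (σ * B + q' - p' * (n * d) + τ * (n * d) ^ 2 / 2),
        add_sub_cancel_left]
      intro x hx
      simp only [GG]
      rw [Finset.sum_range_succ, hAB x hx.1, mul_add,
        h1 (x - n * d) (by linarith [hx.1]) (by linarith [hx.2])]
      ring
    have c3 : Z (ext (GG r σ h d (n + 1)) (n * d + δ) (n * d + d)) = FF Z r (d - δ) := by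
      rw [Z_quad htrans hdual (α := r) hr (by linarith)
        (σ * A + σ * p) (σ * B + σ * q - σ * p * (n * d)), add_sub_add_left_eq_sub]
      intro x hx
      simp only [GG]
      rw [Finset.sum_range_succ, hAB x (by linarith [hx.1]), h2 (x - n * d) (by linarith [hx.1])]
      ring
    rw [c1, c2, c3, ih]
    push_cast
    ring

lemma FF_zero {Z : (ℝ → EReal) → ℝ}
    (hvanish : ∀ a b : ℝ, a ≤ b → Z (eIndicator (Set.Icc a b)) = 0) {t : ℝ} (ht : 0 ≤ t) :
    FF Z 0 t = 0 := by
  have h : ext (fun x => 0 * (x ^ 2 / 2)) 0 t = eIndicator (Set.Icc 0 t) := by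
    funext x
    simp [ext]
  rw [FF, h, hvanish 0 t ht]

lemma FF_nonneg {Z : (ℝ → EReal) → ℝ}
    (hval : IsVal Z) (husc : TauUSC Z) (htrans : TransInv Z) (hdual : DualTransInv Z)
    (hsimple : ∀ u : ℝ → EReal, IsLC u → (∃ x : ℝ, edom u = {x}) → Z u = 0)
    (hvanish : ∀ a b : ℝ, a ≤ b → Z (eIndicator (Set.Icc a b)) = 0)
    {α t : ℝ} (hα : 0 ≤ α) (ht : 0 < t) : 0 ≤ FF Z α t := by
  have hsl : ∀ k : ℕ, Sl (fun x => (t / (k + 1)) * max x 0) (t / (k + 1)) := by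
    intro k
    have hd : 0 < t / (k + 1 : ℝ) := by positivity
    generalize t / (k + 1 : ℝ) = d at hd
    intro x
    rcases le_total x 0 with hx | hx
    · refine ⟨0, by simpa using hd.le, fun z => ?_⟩
      simp only [max_eq_right hx]
      have := le_max_right z 0
      nlinarith
    · refine ⟨d, by rw [abs_of_pos hd], fun z => ?_⟩
      simp only [max_eq_left hx]
      have := le_max_left z 0
      nlinarith
  have := key_limit (Z := Z) (c := 0) (r := 0) (σ := α) (l := 1) husc ht le_rfl hα zero_le_one
    (fun k x => (t / (k + 1)) * max x 0) hsl ?_ ?_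
  · simpa using this
  · intro k x
    have hd : 0 < t / (k + 1 : ℝ) := by positivity
    generalize t / (k + 1 : ℝ) = d at hd
    simp only [HH]
    rw [abs_le]
    rcases le_total x 0 with hx | hx <;> rcases le_total (x - d) 0 with hy | hy <;>
      simp only [hx, hy, max_eq_left, max_eq_right] <;> constructor <;> nlinarith
  · intro k
    have hd : 0 < t / (k + 1 : ℝ) := by positivity
    have hkd : ((k + 1 : ℕ) : ℝ) * (t / (k + 1)) = t := by push_cast; field_simp
    have := GG_step (Z := Z) hval htrans hdual hsimple (r := 0) (σ := α) (τ := 0) (δ := 0)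
      (p := t / (k + 1)) (q := 0) le_rfl hα le_rfl (hsl k) le_rfl hd.le
      (fun x hx => by simp [max_eq_right hx]) 0 0
      (fun x h1 h2 => by simp [le_antisymm h2 h1])
      (fun x hx => by simp [max_eq_left hx]) (k + 1)
    rw [hkd] at this
    rw [this, add_zero, FF_zero hvanish le_rfl, FF_zero hvanish (by linarith)]
    simp

lemma FF_concave {Z : (ℝ → EReal) → ℝ}
    (hval : IsVal Z) (husc : TauUSC Z) (htrans : TransInv Z) (hdual : DualTransInv Z)
    (hsimple : ∀ u : ℝ → EReal, IsLC u → (∃ x : ℝ, edom u = {x}) → Z u = 0)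
    (hvanish : ∀ a b : ℝ, a ≤ b → Z (eIndicator (Set.Icc a b)) = 0)
    {r s l t : ℝ} (hr : 0 ≤ r) (hrs : r < s) (hl0 : 0 < l) (hl1 : l < 1) (ht : 0 < t) :
    l * FF Z s t + (1 - l) * FF Z r t ≤ FF Z (l * s + (1 - l) * r) t := by
  have hF0 : ∀ α, FF Z α 0 = 0 := by
    intro α
    have hS : SG (fun x => α * (x ^ 2 / 2)) 0 0 0 := by
      intro x hx
      refine ⟨0, by simp, fun z hz => ?_⟩
      rw [le_antisymm hx.2 hx.1, le_antisymm hz.2 hz.1]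
      simp
    refine hsimple _ (hS.isLC le_rfl) ⟨0, ?_⟩
    rw [edom_ext, Set.Icc_self]
  have hhom : ∀ α l d : ℝ, 0 ≤ α → 0 ≤ l → 0 ≤ d → FF Z α (l * d) = l * FF Z α d := by
    intro α l d hα hl hd
    refine additive_hom (fun s t hs ht => FF_add hval htrans hdual hsimple hα hs ht) ?_ hl hd
    intro t ht
    rcases ht.eq_or_lt with h | h
    · rw [← h, hF0]
    · exact FF_nonneg hval husc htrans hdual hsimple hvanish hα h
  have hsl : ∀ k : ℕ, Sl (HH (l * (t / (k + 1)))) (t / (k + 1)) := by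
    intro k
    have hd : 0 < t / (k + 1 : ℝ) := by positivity
    generalize t / (k + 1 : ℝ) = d at hd
    have hδ : 0 < l * d := by positivity
    have hδd : l * d ≤ d := by nlinarith
    generalize l * d = e at hδ hδd
    intro x
    refine ⟨max x 0 - max (x - e) 0, ?_, fun z => ?_⟩
    · rw [abs_le]
      rcases le_total x 0 with hx | hx <;> rcases le_total (x - e) 0 with hy | hy <;>
        simp only [hx, hy, max_eq_left, max_eq_right] <;> constructor <;> linarith
    · simp only [HH]
      rcases le_total x 0 with hx | hx <;> rcases le_total (x - e) 0 with hy | hy <;>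
      rcases le_total z 0 with hz | hz <;> rcases le_total (z - e) 0 with hw | hw <;>
        simp only [hx, hy, hz, hw, max_eq_left, max_eq_right] <;>
        nlinarith [sq_nonneg (z - x), sq_nonneg (z - e), sq_nonneg (x - e)]
  have := key_limit (Z := Z) (c := l * FF Z s t + (1 - l) * FF Z r t) (r := r) (σ := s - r) (l := l)
    husc ht hr (by linarith) hl0.le (fun k => HH (l * (t / (k + 1)))) hsl ?_ ?_
  · rwa [show r + l * (s - r) = l * s + (1 - l) * r by ring] at this
  · intro k x
    have hd : 0 < t / (k + 1 : ℝ) := by positivity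
    generalize t / (k + 1 : ℝ) = d at hd
    have hδ : 0 < l * d := by positivity
    have hδd : l * d ≤ d := by nlinarith
    simp only [HH]
    rw [abs_le]
    rcases le_total x 0 with hx | hx
    · rw [max_eq_right hx, max_eq_right (by linarith), max_eq_right (by linarith)]
      constructor <;> nlinarith
    rcases le_total x (l * d) with hy | hy
    · rw [max_eq_left hx, max_eq_right (by linarith), max_eq_right (by linarith)]
      have : x ^ 2 ≤ d ^ 2 := by nlinarith
      constructor <;> nlinarith [sq_nonneg x, mul_nonneg hl0.le (sq_nonneg x)]
    rcases le_total x d with hz | hz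
    · rw [max_eq_left hx, max_eq_left (by linarith), max_eq_right (by linarith)]
      have h1 : x ^ 2 ≤ d ^ 2 := by nlinarith
      have h2 : (x - l * d) ^ 2 ≤ d ^ 2 := by nlinarith
      constructor <;> nlinarith [sq_nonneg x, mul_nonneg hl0.le (sq_nonneg x),
        mul_nonneg (sub_nonneg.2 hl1.le) (sq_nonneg x), sq_nonneg (x - l * d)]
    · rw [max_eq_left hx, max_eq_left (by linarith), max_eq_left (by linarith)]
      have h3 : (x ^ 2 - (x - l * d) ^ 2) / 2 - l * ((x ^ 2 - (x - d) ^ 2) / 2) =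
        (l * (1 - l)) / 2 * d ^ 2 := by ring
      rw [h3]
      have h4 : 0 ≤ l * (1 - l) := mul_nonneg hl0.le (by linarith)
      have h5 : l * (1 - l) ≤ 1 := by nlinarith
      constructor <;> nlinarith [sq_nonneg d]
  · intro k
    have hd : 0 < t / (k + 1 : ℝ) := by positivity
    have hkd : ((k + 1 : ℕ) : ℝ) * (t / (k + 1)) = t := by push_cast; field_simp
    have hδ : 0 < l * (t / (k + 1 : ℝ)) := by positivity
    have hδd : l * (t / (k + 1 : ℝ)) ≤ t / (k + 1 : ℝ) := by nlinarith
    have := GG_step (Z := Z) hval htrans hdual hsimple (r := r) (σ := s - r) (τ := s - r)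
      (δ := l * (t / (k + 1))) (p := l * (t / (k + 1))) (q := - (l * (t / (k + 1))) ^ 2 / 2)
      hr (by linarith) (by linarith) (hsl k) hδ.le hδd
      (fun x hx => by
        simp only [HH]; rw [max_eq_right hx, max_eq_right (by linarith)]; ring) 0 0
      (fun x h1 h2 => by
        simp only [HH]; rw [max_eq_left h1, max_eq_right (by linarith)]; ring)
      (fun x hx => by
        simp only [HH]; rw [max_eq_left (by linarith), max_eq_left (by linarith)]; ring) (k + 1)
    rw [hkd] at this
    rw [this, add_sub_cancel, hhom s l _ (by linarith) hl0.le hd.le,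
      show t / (k + 1 : ℝ) - l * (t / (k + 1)) = (1 - l) * (t / (k + 1)) by ring,
      hhom r (1 - l) _ hr (by linarith) hd.le]
    have hs' := hhom s ((k + 1 : ℕ) : ℝ) _ (by linarith) (by positivity) hd.le
    have hr' := hhom r ((k + 1 : ℕ) : ℝ) _ hr (by positivity) hd.le
    rw [hkd] at hs' hr'
    rw [hs', hr']
    ring

lemma zetaOf_eq {Z : (ℝ → EReal) → ℝ} (htrans : TransInv Z) (hdual : DualTransInv Z)
    {m : ℝ} (hm : 0 < m) {a : ℝ} (ha : 0 ≤ a) : zetaOf Z m a = FF Z a (2 * m) / (2 * m) := by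
  have := Z_quad (Z := Z) htrans hdual ha (f := fun x => a * (x ^ 2 / 2)) (a := -m) (b := m)
    (by linarith) 0 0 (fun x _ => by ring)
  rw [show m - -m = 2 * m by ring] at this
  rw [← this]
  rfl

/-- For a simple, τ-upper semicontinuous, translation and dually
epi-translation invariant valuation `Z` on `LC(ℝ)` vanishing on indicators of closed intervals,
the function `ζ(a) = Z(a·q + I_{[-m,m]})/(2m)` is non-negative and concave:
`ζ(λs + (1−λ)r) ≥ λζ(s) + (1−λ)ζ(r)` for all `0 ≤ r < s` and `λ ∈ (0,1)`. -/
theorem stmt12 (Z : (ℝ → EReal) → ℝ)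
    (hval : IsVal Z) (husc : TauUSC Z) (htrans : TransInv Z) (hdual : DualTransInv Z)
    (hsimple : ∀ u : ℝ → EReal, IsLC u → (∃ x : ℝ, edom u = {x}) → Z u = 0)
    (hvanish : ∀ a b : ℝ, a ≤ b → Z (eIndicator (Set.Icc a b)) = 0)
    (m : ℝ) (hm : 0 < m) :
    (∀ a : ℝ, 0 < a → 0 ≤ zetaOf Z m a) ∧
    (∀ r s l : ℝ, 0 ≤ r → r < s → 0 < l → l < 1 →
      l * zetaOf Z m s + (1 - l) * zetaOf Z m r ≤ zetaOf Z m (l * s + (1 - l) * r)) := by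
  have h2m : 0 < 2 * m := by linarith
  refine ⟨fun a ha => ?_, fun r s l hr hrs hl0 hl1 => ?_⟩
  · rw [zetaOf_eq htrans hdual hm ha.le]
    exact div_nonneg (FF_nonneg hval husc htrans hdual hsimple hvanish ha.le h2m) h2m.le
  · have hl : 0 ≤ 1 - l := by linarith
    have hs : 0 ≤ s := by linarith
    rw [zetaOf_eq htrans hdual hm hs, zetaOf_eq htrans hdual hm hr,
      zetaOf_eq htrans hdual hm (by positivity), ← mul_div_assoc, ← mul_div_assoc, ← add_div]
    gcongr
    exact FF_concave hval husc htrans hdual hsimple hvanish hr hrs hl0 hl1 h2m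

end
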